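/- Khintchine's transference principle: the set of very well approximable vectors in ℝⁿ defined simultaneously equals the set defined linearly; i.e. ⋃_{α > 1/n} S_α(ℝⁿ) = ⋃_{β > n} L_β(ℝⁿ). -/

import Mathlib

open Filter

/-- The set `S_α(ℝⁿ)` of simultaneously α-very well approximable vectors:
`‖q•x − p‖ ≤ q^{−α}` for infinitely many `(q, p) ∈ ℕ × ℤⁿ` (max-norm). -/
noncomputable def SAlpha (n : ℕ) (α : ℝ) : Set (Fin n → ℝ) :=
  {x | {qp : ℕ × (Fin n → ℤ) | 0 < qp.1 ∧
      ‖(qp.1 : ℝ) • x - (fun i => (qp.2 i : ℝ))‖ ≤ (qp.1 : ℝ) ^ (-α)}.Infinite}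

/-- The set `L_β(ℝⁿ)` of linearly β-very well approximable vectors:
`|q̄·x − p| ≤ ‖q̄‖^{−β}` for infinitely many `(q̄, p) ∈ ℤⁿ × ℕ` (max-norm on `q̄`). -/
noncomputable def LBeta (n : ℕ) (β : ℝ) : Set (Fin n → ℝ) :=
  {x | {qp : (Fin n → ℤ) × ℕ | qp.1 ≠ 0 ∧
      |(∑ i, (qp.1 i : ℝ) * x i) - (qp.2 : ℝ)| ≤
        ‖(fun i => (qp.1 i : ℝ) : Fin n → ℝ)‖ ^ (-β)}.Infinite}

/-!
A pigeonhole argument moves between the two kinds of approximation. Given `p ≈ q • x`, some nonzero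
`u` of size at most `q ^ (1 / n)` satisfies `u ⬝ p ≡ 0 mod q`, and then `u ⬝ x` is close to the
integer `u ⬝ p / q`. Given `u ⬝ x ≈ v` with `u j` the largest coordinate of `u`, Dirichlet's
argument in the other coordinates, combined with a pigeonhole modulo `u j`, yields `q` and `p` with
`u ⬝ p = q * v` and `p i ≈ q * x i` for `i ≠ j`; the linear relation then forces `p j ≈ q * x j`.
With exponents these are Khintchine's inclusions `S_α ⊆ L_β` for `β < n α + n - 1` and
`L_β ⊆ S_α` for `α < β / ((n - 1) β + n)`. The construction may return the same solution
over and over, so infinitely many solutions are obtained from arbitrarily small errors: either the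
errors are nonzero, or the multiples of an exact solution are again solutions.
-/

section Infinite

theorem infinite_image_fst {A B : Type*} {S : Set (A × B)} (hS : S.Infinite)
    (hfiber : ∀ a, {b | (a, b) ∈ S}.Finite) : (Prod.fst '' S).Infinite := fun himage =>
  hS <| Set.Finite.of_finite_fibers Prod.fst himage fun a _ =>
    ((hfiber a).image (Prod.mk a)).subset <| by
      rintro ⟨_, b⟩ ⟨hb, rfl⟩
      exact ⟨b, hb, rfl⟩

theorem infinite_of_forall_exists_norm_lt {M E : Type*} [AddLeftCancelMonoid M]
    [NormedAddGroup E] {S : Set M} {f : M → E} (hzero : 0 ∉ S)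
    (hnsmul : ∀ m ∈ S, f m = 0 → ∀ k : ℕ, 0 < k → k • m ∈ S)
    (hsmall : ∀ ε > 0, ∃ m ∈ S, ‖f m‖ < ε) : S.Infinite := by
  intro hfin
  obtain ⟨m₀, hm₀, -⟩ := hsmall 1 one_pos
  obtain ⟨m, hm, hmin⟩ := Set.exists_min_image S (fun m => ‖f m‖) hfin ⟨m₀, hm₀⟩
  by_cases hfm : f m = 0
  · have horder : ¬IsOfFinAddOrder m := fun h => by
      obtain ⟨k, hk, hkm⟩ := isOfFinAddOrder_iff_nsmul_eq_zero.1 h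
      exact hzero (hkm ▸ hnsmul m hm hfm k hk)
    have hinj := (injective_nsmul_iff_not_isOfFinAddOrder.2 horder).comp Nat.succ_injective
    exact Set.infinite_of_injective_forall_mem hinj (fun k => hnsmul m hm hfm _ k.succ_pos) hfin
  · obtain ⟨m', hm', hlt⟩ := hsmall ‖f m‖ (norm_pos_iff.2 hfm)
    exact (hmin m' hm').not_gt hlt

end Infinite

section Pigeonhole

variable {ι G : Type*} [Fintype ι] [Fintype G]

theorem exists_ne_zero_norm_le_map_eq_zero [AddGroup G] (f : (ι → ℤ) →+ G) {U : ℕ}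
    (hU : Fintype.card G < (U + 1) ^ Fintype.card ι) :
    ∃ u : ι → ℤ, u ≠ 0 ∧ ‖u‖ ≤ U ∧ f u = 0 := by
  classical
  have hcard : (Finset.univ : Finset G).card < (Finset.Icc (0 : ι → ℤ) fun _ => (U : ℤ)).card := by
    simpa [Pi.card_Icc] using hU
  obtain ⟨a, ha, b, hb, hab, hf⟩ :=
    Finset.exists_ne_map_eq_of_card_lt_of_maps_to hcard (f := f) (by simp [Set.MapsTo])
  rw [Finset.mem_Icc] at ha hb
  refine ⟨a - b, sub_ne_zero.2 hab, (pi_norm_le_iff_of_nonneg U.cast_nonneg).2 fun i => ?_, by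
    rw [map_sub, hf, sub_self]⟩
  have hi : |a i - b i| ≤ U := abs_sub_le_of_nonneg_of_le (ha.1 i) (ha.2 i) (hb.1 i) (hb.2 i)
  rw [Pi.sub_apply, Int.norm_eq_abs]
  exact_mod_cast hi

theorem abs_sub_le_inv_of_floor_mul_eq {K s t : ℝ} (hK : 0 < K) (h : ⌊K * s⌋ = ⌊K * t⌋) :
    |s - t| ≤ K⁻¹ := by
  have hlt : |K * (s - t)| < 1 := by
    rw [mul_sub]
    exact Int.abs_sub_lt_one_of_floor_eq_floor h
  rw [abs_mul, abs_of_pos hK] at hlt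
  exact one_div K ▸ (le_div_iff₀' hK).2 hlt.le

theorem exists_lt_map_eq_abs_fract_sub_fract_le (c : ℕ → G) (y : ℕ → ι → ℝ) {K : ℕ}
    (hK : 0 < K) :
    ∃ a b : ℕ, a < b ∧ b ≤ Fintype.card G * K ^ Fintype.card ι ∧ c a = c b ∧
      ∀ i, |Int.fract (y b i) - Int.fract (y a i)| ≤ (K : ℝ)⁻¹ := by
  classical
  have hK' : (0 : ℝ) < K := Nat.cast_pos.2 hK
  set N := Fintype.card G * K ^ Fintype.card ι
  let cell (k : ℕ) : G × (ι → ℤ) := (c k, fun i => ⌊K * Int.fract (y k i)⌋)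
  let cells : Finset (G × (ι → ℤ)) :=
    Finset.univ ×ˢ Fintype.piFinset fun _ => Finset.Ico 0 (K : ℤ)
  have hmaps : Set.MapsTo cell (Finset.range (N + 1)) cells := fun k _ => by
    simp only [cell, cells, Finset.mem_coe, Finset.mem_product, Finset.mem_univ, true_and,
      Fintype.mem_piFinset, Finset.mem_Ico, Int.le_floor, Int.floor_lt]
    intro i
    push_cast
    exact ⟨mul_nonneg hK'.le (Int.fract_nonneg _), mul_lt_of_lt_one_right hK' (Int.fract_lt_one _)⟩
  have hcard : cells.card < (Finset.range (N + 1)).card := by simp [cells, N]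
  obtain ⟨a, ha, b, hb, hab, hcell⟩ :=
    Finset.exists_ne_map_eq_of_card_lt_of_maps_to hcard hmaps
  wlog hlt : a < b generalizing a b
  · exact this b hb a ha hab.symm hcell.symm (hab.lt_or_gt.resolve_left hlt)
  obtain ⟨hc, hfloor⟩ := Prod.mk.inj hcell
  exact ⟨a, b, hlt, Finset.mem_range_succ_iff.1 hb, hc, fun i =>
    abs_sub_le_inv_of_floor_mul_eq hK' (congrFun hfloor i).symm⟩

end Pigeonhole

section Transference

theorem abs_sum_mul_le {κ : Type*} (s : Finset κ) {a b : κ → ℝ} {A B : ℝ}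
    (ha : ∀ i ∈ s, |a i| ≤ A) (hb : ∀ i ∈ s, |b i| ≤ B) :
    |∑ i ∈ s, a i * b i| ≤ s.card * (A * B) := by
  rw [← nsmul_eq_mul]
  refine (Finset.abs_sum_le_sum_abs _ _).trans (Finset.sum_le_card_nsmul s _ _ fun i hi => ?_)
  rw [abs_mul]
  exact mul_le_mul (ha i hi) (hb i hi) (abs_nonneg _) ((abs_nonneg _).trans (ha i hi))

variable {ι : Type*} [Fintype ι] {x : ι → ℝ}

theorem natCast_mul_sum_mul_sub (x : ι → ℝ) {u p : ι → ℤ} {v : ℤ} {q : ℕ}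
    (h : ∑ i, u i * p i = q * v) :
    (q : ℝ) * (∑ i, (u i : ℝ) * x i - v) = ∑ i, (u i : ℝ) * (q * x i - p i) := by
  have h' : ∑ i, (u i : ℝ) * p i = q * v := mod_cast h
  rw [mul_sub, ← h', Finset.mul_sum, ← Finset.sum_sub_distrib]
  exact Finset.sum_congr rfl fun i _ => by ring

theorem exists_linear_approx_of_simultaneous [Nonempty ι] {q : ℕ} (hq : 0 < q) {p : ι → ℤ} {ε : ℝ}
    (h : ‖(q : ℝ) • x - (fun i => (p i : ℝ))‖ ≤ ε) :
    ∃ u : ι → ℤ, ∃ v : ℤ, u ≠ 0 ∧ ‖u‖ ≤ (q : ℝ) ^ (Fintype.card ι : ℝ)⁻¹ ∧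
      |∑ i, (u i : ℝ) * x i - v| ≤
        Fintype.card ι * ((q : ℝ) ^ (Fintype.card ι : ℝ)⁻¹ * ε) / q := by
  have : NeZero q := ⟨hq.ne'⟩
  have hq' : (0 : ℝ) < q := Nat.cast_pos.2 hq
  set R : ℝ := (q : ℝ) ^ (Fintype.card ι : ℝ)⁻¹
  have hU : Fintype.card (ZMod q) < (⌊R⌋₊ + 1) ^ Fintype.card ι := by
    rw [ZMod.card, ← Nat.cast_lt (α := ℝ)]
    calc (q : ℝ) = R ^ Fintype.card ι :=
          (Real.rpow_inv_natCast_pow hq'.le Fintype.card_ne_zero).symm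
      _ < ((⌊R⌋₊ + 1 : ℕ) ^ Fintype.card ι : ℕ) := by
        push_cast
        exact pow_lt_pow_left₀ (Nat.lt_floor_add_one R) (by positivity) Fintype.card_ne_zero
  let residue : (ι → ℤ) →+ ZMod q := AddMonoidHom.mk' (fun u => ((∑ i, u i * p i : ℤ) : ZMod q))
    fun a b => by simp [add_mul, Finset.sum_add_distrib]
  obtain ⟨u, hu, hunorm, hres⟩ := exists_ne_zero_norm_le_map_eq_zero residue hU
  obtain ⟨v, hv⟩ := (ZMod.intCast_zmod_eq_zero_iff_dvd _ q).1 hres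
  have huR : ‖u‖ ≤ R := hunorm.trans (Nat.floor_le (by positivity))
  refine ⟨u, v, hu, huR, (le_div_iff₀' hq').2 ?_⟩
  rw [← Nat.abs_cast q, ← abs_mul, natCast_mul_sum_mul_sub x hv]
  exact abs_sum_mul_le Finset.univ (fun i _ => (norm_le_pi_norm u i).trans huR)
    fun i _ => (norm_le_pi_norm ((q : ℝ) • x - fun i => (p i : ℝ)) i).trans h

theorem exists_sum_mul_eq_abs_sub_le (x : ι → ℝ) {u : ι → ℤ} {j : ι} (hj : u j ≠ 0) (v : ℤ)
    {K : ℕ} (hK : 0 < K) :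
    ∃ q : ℕ, ∃ p : ι → ℤ, 0 < q ∧ q ≤ (u j).natAbs * K ^ (Fintype.card ι - 1) ∧
      ∑ i, u i * p i = q * v ∧ ∀ i ≠ j, |q * x i - p i| ≤ (K : ℝ)⁻¹ := by
  classical
  have : NeZero (u j).natAbs := ⟨Int.natAbs_ne_zero.2 hj⟩
  let r (k : ℕ) : ℤ := k * v - ∑ i : {i // i ≠ j}, u i * ⌊k * x i⌋
  obtain ⟨a, b, hab, hb, hr, hfract⟩ := exists_lt_map_eq_abs_fract_sub_fract_le
    (fun k => (r k : ZMod (u j).natAbs)) (fun k (i : {i // i ≠ j}) => k * x i) hK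
  obtain ⟨w, hw⟩ : u j ∣ r b - r a :=
    Int.natAbs_dvd.1 ((ZMod.intCast_eq_intCast_iff_dvd_sub _ _ _).1 hr)
  refine ⟨b - a, Function.update (fun i => ⌊b * x i⌋ - ⌊a * x i⌋) j w, by omega, ?_, ?_,
    fun i hi => ?_⟩
  · have hcard : Fintype.card {i // i ≠ j} = Fintype.card ι - 1 := by simp
    rw [ZMod.card, hcard] at hb
    omega
  · have hsum : ∑ i : {i // i ≠ j}, u i * Function.update (fun i => ⌊b * x i⌋ - ⌊a * x i⌋) j w i =
        ∑ i : {i // i ≠ j}, u i * ⌊b * x i⌋ - ∑ i : {i // i ≠ j}, u i * ⌊a * x i⌋ := by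
      rw [← Finset.sum_sub_distrib]
      exact Finset.sum_congr rfl fun i _ => by rw [Function.update_of_ne i.2, mul_sub]
    rw [Fintype.sum_eq_add_sum_subtype_ne _ j, hsum, Function.update_self, ← hw,
      Nat.cast_sub hab.le]
    ring
  · rw [Function.update_of_ne hi, Nat.cast_sub hab.le]
    convert hfract ⟨i, hi⟩ using 2
    push_cast
    simp only [Int.fract]
    ring

theorem exists_norm_eq_abs_apply [Nonempty ι] (u : ι → ℤ) : ∃ j, ‖u‖ = |(u j : ℝ)| := by
  obtain ⟨j, hj⟩ := Finite.exists_max fun i => ‖u i‖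
  exact ⟨j, le_antisymm ((pi_norm_le_iff_of_nonneg (abs_nonneg _)).2 hj) (norm_le_pi_norm u j)⟩

theorem norm_mul_abs_sub_le_of_sum_mul_eq {u p : ι → ℤ} {v : ℤ} {q : ℕ} {j : ι} {δ ε : ℝ}
    (hj : ‖u‖ = |(u j : ℝ)|) (hsum : ∑ i, u i * p i = q * v)
    (hε : |∑ i, (u i : ℝ) * x i - v| ≤ ε) (hδ : ∀ i ≠ j, |q * x i - p i| ≤ δ) (hδ0 : 0 ≤ δ) :
    ‖u‖ * |q * x j - p j| ≤ q * ε + Fintype.card ι * (‖u‖ * δ) := by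
  classical
  have hlinear : |q * (∑ i, (u i : ℝ) * x i - v)| ≤ q * ε := by
    rw [abs_mul, Nat.abs_cast]
    gcongr
  have hrest : |∑ i : {i // i ≠ j}, (u i : ℝ) * (q * x i - p i)| ≤
      Fintype.card ι * (‖u‖ * δ) := by
    refine (abs_sum_mul_le Finset.univ (fun (i : {i // i ≠ j}) _ => norm_le_pi_norm u i)
      fun i _ => hδ i i.2).trans ?_
    gcongr
    exact Fintype.card_subtype_le _
  have hsplit : (u j : ℝ) * (q * x j - p j) = q * (∑ i, (u i : ℝ) * x i - v) -
      ∑ i : {i // i ≠ j}, (u i : ℝ) * (q * x i - p i) := by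
    rw [natCast_mul_sum_mul_sub x hsum, Fintype.sum_eq_add_sum_subtype_ne _ j, add_sub_cancel_right]
  rw [hj, ← abs_mul, ← hj, hsplit]
  exact (abs_sub _ _).trans (add_le_add hlinear hrest)

theorem exists_simultaneous_approx_of_linear [Nonempty ι] {u : ι → ℤ} (hu : u ≠ 0) {v : ℤ} {ε : ℝ}
    (h : |∑ i, (u i : ℝ) * x i - v| ≤ ε) {K : ℕ} (hK : 0 < K) :
    ∃ q : ℕ, ∃ p : ι → ℤ, 0 < q ∧ q ≤ ‖u‖ * K ^ (Fintype.card ι - 1) ∧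
      ‖(q : ℝ) • x - (fun i => (p i : ℝ))‖ ≤
        Fintype.card ι * (K : ℝ)⁻¹ + K ^ (Fintype.card ι - 1) * ε := by
  obtain ⟨j, hj⟩ := exists_norm_eq_abs_apply u
  have hunorm : 0 < ‖u‖ := norm_pos_iff.2 hu
  have huj : u j ≠ 0 := fun h0 => by simp [hj, h0] at hunorm
  obtain ⟨q, p, hq, hqle, hsum, happrox⟩ := exists_sum_mul_eq_abs_sub_le x huj v hK
  have hε : 0 ≤ ε := (abs_nonneg _).trans h
  have hqle' : (q : ℝ) ≤ ‖u‖ * K ^ (Fintype.card ι - 1) := by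
    rw [hj, ← Int.cast_abs, ← Nat.cast_natAbs]
    exact_mod_cast hqle
  refine ⟨q, p, hq, hqle', (pi_norm_le_iff_of_nonneg (by positivity)).2 fun i => ?_⟩
  change |q * x i - p i| ≤ _
  obtain hij | rfl := ne_or_eq i j
  · have hcard : (1 : ℝ) ≤ Fintype.card ι := Nat.one_le_cast.2 Fintype.card_pos
    calc |q * x i - p i| ≤ (K : ℝ)⁻¹ := happrox i hij
      _ ≤ Fintype.card ι * (K : ℝ)⁻¹ := le_mul_of_one_le_left (by positivity) hcard
      _ ≤ _ := le_add_of_nonneg_right (by positivity)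
  · refine le_of_mul_le_mul_left ?_ hunorm
    calc ‖u‖ * |q * x i - p i| ≤ q * ε + Fintype.card ι * (‖u‖ * (K : ℝ)⁻¹) :=
          norm_mul_abs_sub_le_of_sum_mul_eq hj hsum h happrox (by positivity)
      _ ≤ ‖u‖ * K ^ (Fintype.card ι - 1) * ε + Fintype.card ι * (‖u‖ * (K : ℝ)⁻¹) := by gcongr
      _ = ‖u‖ * (Fintype.card ι * (K : ℝ)⁻¹ + K ^ (Fintype.card ι - 1) * ε) := by ring

theorem one_le_norm_of_ne_zero {u : ι → ℤ} (hu : u ≠ 0) : 1 ≤ ‖u‖ := by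
  obtain ⟨i, hi⟩ := Function.ne_iff.1 hu
  refine le_trans ?_ (norm_le_pi_norm u i)
  rw [Int.norm_eq_abs]
  exact_mod_cast Int.one_le_abs hi

theorem exists_simultaneous_approx_of_linear_rpow [Nonempty ι] {u : ι → ℤ} (hu : u ≠ 0) {v : ℤ}
    {β : ℝ} (hβ : 0 ≤ β) (h : |∑ i, (u i : ℝ) * x i - v| ≤ ‖u‖ ^ (-β)) :
    ∃ q : ℕ, ∃ p : ι → ℤ, 0 < q ∧
      q ≤ ‖u‖ ^ (1 + β / Fintype.card ι * (Fintype.card ι - 1)) ∧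
      ‖(q : ℝ) • x - (fun i => (p i : ℝ))‖ ≤
        2 * (Fintype.card ι + 1) * ‖u‖ ^ (-(β / Fintype.card ι)) := by
  set n := Fintype.card ι
  have hn : 0 < n := Fintype.card_pos
  have hu1 := one_le_norm_of_ne_zero hu
  have hu0 : 0 < ‖u‖ := one_pos.trans_le hu1
  -- The integer part `K` of `R` balances the error terms `K⁻¹` and `K ^ (n - 1) * ‖u‖ ^ (-β)`.
  set R := ‖u‖ ^ (β / n) with hR
  have hR1 : 1 ≤ R := Real.one_le_rpow hu1 (by positivity)
  set K := ⌊R⌋₊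
  have hK : 0 < K := Nat.floor_pos.2 hR1
  have hK1 : (1 : ℝ) ≤ K := Nat.one_le_cast.2 hK
  have hKR : K ≤ R := Nat.floor_le (by positivity)
  obtain ⟨q, p, hq, hqle, hqp⟩ := exists_simultaneous_approx_of_linear hu h hK
  refine ⟨q, p, hq, hqle.trans ?_, hqp.trans ?_⟩
  · calc ‖u‖ * (K : ℝ) ^ (n - 1) ≤ ‖u‖ * R ^ (n - 1) := by gcongr
      _ = ‖u‖ ^ (1 + β / n * (n - 1)) := by
        rw [Real.rpow_add hu0, Real.rpow_one, Real.rpow_mul hu0.le, ← hR, ← Real.rpow_natCast R,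
          Nat.cast_pred hn]
  have hpow : (K : ℝ) ^ (n - 1) * ‖u‖ ^ (-β) ≤ (K : ℝ)⁻¹ := by
    have hKn : (K : ℝ) ^ (n - 1) * K ≤ ‖u‖ ^ β := by
      rw [pow_sub_one_mul hn.ne']
      calc (K : ℝ) ^ n ≤ R ^ n := by gcongr
        _ = ‖u‖ ^ β := by
          rw [hR, ← Real.rpow_mul_natCast hu0.le, div_mul_cancel₀ _ (Nat.cast_ne_zero.2 hn.ne')]
    rw [Real.rpow_neg hu0.le, ← div_eq_mul_inv, div_le_iff₀ (by positivity), inv_mul_eq_div]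
    exact (le_div_iff₀ (by positivity)).2 hKn
  have hinv : (K : ℝ)⁻¹ ≤ 2 * R⁻¹ := by
    rw [← div_eq_mul_inv, inv_le_comm₀ (by positivity) (by positivity), inv_div]
    linarith [Nat.lt_floor_add_one R]
  calc n * (K : ℝ)⁻¹ + (K : ℝ) ^ (n - 1) * ‖u‖ ^ (-β) ≤ n * (K : ℝ)⁻¹ + (K : ℝ)⁻¹ := by gcongr
    _ = (n + 1) * (K : ℝ)⁻¹ := by ring
    _ ≤ (n + 1) * (2 * R⁻¹) := by gcongr
    _ = 2 * (n + 1) * ‖u‖ ^ (-(β / n)) := by rw [Real.rpow_neg hu0.le]; ring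

end Transference

section WellApproximable

theorem finite_setOf_norm_sub_intCast_le {ι : Type*} [Fintype ι] (y : ι → ℝ) (r : ℝ) :
    {p : ι → ℤ | ‖y - (fun i => (p i : ℝ))‖ ≤ r}.Finite := by
  classical
  refine (Set.finite_Icc (fun i => ⌈y i - r⌉) fun i => ⌊y i + r⌋).subset fun p hp => ?_
  have hdist (i : ι) : |y i - p i| ≤ r := (norm_le_pi_norm _ i).trans hp
  exact ⟨fun i => Int.ceil_le.2 (sub_le_comm.1 (abs_le.1 (hdist i)).2),
    fun i => Int.le_floor.2 (by linarith [(abs_le.1 (hdist i)).1])⟩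

theorem finite_setOf_abs_sub_natCast_le (y r : ℝ) : {v : ℕ | |y - v| ≤ r}.Finite :=
  (Set.finite_Iic ⌊y + r⌋₊).subset fun v hv =>
    Nat.le_floor (by linarith [(abs_le.1 (Set.mem_ofPred.1 hv)).1])

theorem exists_natCast_abs_sum_sub_eq {ι : Type*} [Fintype ι] (x : ι → ℝ) (u : ι → ℤ) (v : ℤ) :
    ∃ u' : ι → ℤ, ∃ v' : ℕ, ‖u'‖ = ‖u‖ ∧
      |∑ i, (u' i : ℝ) * x i - v'| = |∑ i, (u i : ℝ) * x i - v| := by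
  obtain ⟨w, rfl | rfl⟩ := v.eq_nat_or_neg
  · exact ⟨u, w, rfl, by simp⟩
  · refine ⟨-u, w, norm_neg u, ?_⟩
    rw [← abs_neg]
    simp [add_comm]

theorem eventually_const_mul_rpow_le_rpow (C : ℝ) {a b : ℝ} (hab : a < b) :
    ∀ᶠ t : ℝ in atTop, C * t ^ a ≤ t ^ b := by
  filter_upwards [(tendsto_rpow_atTop (sub_pos.2 hab)).eventually_ge_atTop C,
    eventually_gt_atTop 0] with t hC ht
  calc C * t ^ a ≤ t ^ (b - a) * t ^ a := by gcongr
    _ = t ^ b := by rw [← Real.rpow_add ht, sub_add_cancel]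

variable {n : ℕ} {x : Fin n → ℝ} {α β : ℝ}

theorem frequently_of_mem_SAlpha (hx : x ∈ SAlpha n α) :
    ∃ᶠ q : ℕ in atTop, ∃ p : Fin n → ℤ,
      ‖(q : ℝ) • x - (fun i => (p i : ℝ))‖ ≤ (q : ℝ) ^ (-α) := by
  refine Nat.frequently_atTop_iff_infinite.2 ((infinite_image_fst hx fun q =>
    (finite_setOf_norm_sub_intCast_le ((q : ℝ) • x) ((q : ℝ) ^ (-α))).subset
      fun _ hp => hp.2).mono ?_)
  rintro _ ⟨⟨q, p⟩, hqp, rfl⟩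
  exact ⟨p, hqp.2⟩

theorem frequently_of_mem_LBeta (hx : x ∈ LBeta n β) :
    ∃ᶠ u : Fin n → ℤ in cofinite, ∃ v : ℕ, |∑ i, (u i : ℝ) * x i - v| ≤ ‖u‖ ^ (-β) := by
  refine frequently_cofinite_iff_infinite.2 ((infinite_image_fst hx fun u =>
    (finite_setOf_abs_sub_natCast_le (∑ i, (u i : ℝ) * x i) (‖u‖ ^ (-β))).subset
      fun _ hv => hv.2).mono ?_)
  rintro _ ⟨⟨u, v⟩, huv, rfl⟩
  -- The norm of `u` is definitionally the norm of its real cast, which `LBeta` uses.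
  exact ⟨v, huv.2⟩

theorem mem_SAlpha_of_forall_exists_norm_lt
    (h : ∀ ε > 0, ∃ q : ℕ, ∃ p : Fin n → ℤ, 0 < q ∧
      ‖(q : ℝ) • x - (fun i => (p i : ℝ))‖ ≤ (q : ℝ) ^ (-α) ∧
      ‖(q : ℝ) • x - (fun i => (p i : ℝ))‖ < ε) : x ∈ SAlpha n α := by
  refine infinite_of_forall_exists_norm_lt
    (f := fun qp : ℕ × (Fin n → ℤ) => (qp.1 : ℝ) • x - (fun i => (qp.2 i : ℝ)))
    (fun h0 => h0.1.ne rfl) ?_ fun ε hε => ?_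
  · rintro ⟨q, p⟩ ⟨hq, -⟩ hzero k hk
    have hmul : ((k * q : ℕ) : ℝ) • x - (fun i => ((k • p i : ℤ) : ℝ)) = 0 := by
      ext i
      have hi : q * x i - p i = 0 := congrFun hzero i
      simp only [Pi.sub_apply, Pi.smul_apply, smul_eq_mul, nsmul_eq_mul, Pi.zero_apply]
      push_cast
      linear_combination (k : ℝ) * hi
    exact ⟨Nat.mul_pos hk hq, (norm_eq_zero.2 hmul).trans_le (by positivity)⟩
  · obtain ⟨q, p, hq, hle, hlt⟩ := h ε hε
    exact ⟨(q, p), ⟨hq, hle⟩, hlt⟩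

theorem mem_LBeta_of_forall_exists_abs_lt
    (h : ∀ ε > 0, ∃ u : Fin n → ℤ, ∃ v : ℤ, u ≠ 0 ∧
      |∑ i, (u i : ℝ) * x i - v| ≤ ‖u‖ ^ (-β) ∧ |∑ i, (u i : ℝ) * x i - v| < ε) :
    x ∈ LBeta n β := by
  refine infinite_of_forall_exists_norm_lt
    (f := fun uv : (Fin n → ℤ) × ℕ => ∑ i, (uv.1 i : ℝ) * x i - uv.2)
    (fun h0 => h0.1 rfl) ?_ fun ε hε => ?_
  · rintro ⟨u, v⟩ ⟨hu, -⟩ hzero k hk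
    have hmul : ∑ i, ((k • u i : ℤ) : ℝ) * x i - ((k * v : ℕ) : ℝ) = 0 := by
      simp only [nsmul_eq_mul, Int.cast_mul, Int.cast_natCast, Nat.cast_mul, mul_assoc,
        ← Finset.mul_sum, ← mul_sub]
      exact mul_eq_zero_of_right _ hzero
    exact ⟨smul_ne_zero hk.ne' hu, (abs_eq_zero.2 hmul).trans_le (by positivity)⟩
  · obtain ⟨u, v, hu, hle, hlt⟩ := h ε hε
    obtain ⟨u', v', hnorm, habs⟩ := exists_natCast_abs_sum_sub_eq x u v
    rw [← norm_ne_zero_iff, ← hnorm, norm_ne_zero_iff] at hu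
    rw [← habs] at hle hlt
    exact ⟨(u', v'), ⟨hu, hle.trans_eq (by rw [← hnorm]; rfl)⟩, hlt⟩

theorem SAlpha_subset_LBeta (hβ : 0 < β) (hβα : β < n * α + (n - 1)) :
    SAlpha n α ⊆ LBeta n β := by
  intro x hx
  obtain rfl | hn := n.eq_zero_or_pos
  · rw [Nat.cast_zero] at hβα
    linarith
  have hn' : (0 : ℝ) < n := Nat.cast_pos.2 hn
  have : Nonempty (Fin n) := ⟨⟨0, hn⟩⟩
  have hexp : (n : ℝ)⁻¹ - α - 1 < -(β / n) := by
    have : β / n < 1 + α - (n : ℝ)⁻¹ := by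
      rw [div_lt_iff₀' hn', mul_sub, mul_inv_cancel₀ hn'.ne']
      linarith
    linarith
  refine mem_LBeta_of_forall_exists_abs_lt fun ε hε => ?_
  have hlarge : ∀ᶠ t : ℝ in atTop,
      0 < t ∧ n * t ^ ((n : ℝ)⁻¹ - α - 1) ≤ t ^ (-(β / n)) ∧ t ^ (-(β / n)) < ε :=
    (eventually_gt_atTop 0).and <| (eventually_const_mul_rpow_le_rpow n hexp).and <|
      (tendsto_rpow_neg_atTop (by positivity)).eventually_lt_const hε
  obtain ⟨q, ⟨p, hqp⟩, hq, hbound, hlt⟩ := ((frequently_of_mem_SAlpha hx).and_eventually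
    (tendsto_natCast_atTop_atTop.eventually hlarge)).exists
  obtain ⟨u, v, hu, hunorm, huv⟩ := exists_linear_approx_of_simultaneous (Nat.cast_pos.1 hq) hqp
  rw [Fintype.card_fin] at hunorm huv
  have herr : |∑ i, (u i : ℝ) * x i - v| ≤ (q : ℝ) ^ (-(β / n)) := by
    refine huv.trans (le_trans (le_of_eq ?_) hbound)
    rw [Real.rpow_sub hq, Real.rpow_sub hq, Real.rpow_one, Real.rpow_neg hq.le]
    ring
  refine ⟨u, v, hu, herr.trans ?_, herr.trans_lt hlt⟩
  calc (q : ℝ) ^ (-(β / n)) = ((q : ℝ) ^ (n : ℝ)⁻¹) ^ (-β) := by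
        rw [← Real.rpow_mul hq.le, inv_mul_eq_div, neg_div]
    _ ≤ ‖u‖ ^ (-β) := Real.rpow_le_rpow_of_nonpos (norm_pos_iff.2 hu) hunorm (neg_nonpos.2 hβ.le)

theorem LBeta_subset_SAlpha (hn : 0 < n) (hα : 0 < α) (hβ : 0 < β)
    (hαβ : α < β / ((n - 1) * β + n)) : LBeta n β ⊆ SAlpha n α := by
  intro x hx
  have hn1 : (1 : ℝ) ≤ n := Nat.one_le_cast.2 hn
  have : Nonempty (Fin n) := ⟨⟨0, hn⟩⟩
  set σ : ℝ := 1 + β / n * (n - 1)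
  have hσ : 0 < σ := add_pos_of_pos_of_nonneg one_pos
    (mul_nonneg (by positivity) (sub_nonneg.2 hn1))
  have hexp : -(β / n) < σ * -α := by
    have hden : (n - 1) * β + n = n * σ := by
      simp only [σ]
      field_simp
      ring
    rw [hden, ← div_div, lt_div_iff₀ hσ] at hαβ
    linarith
  refine mem_SAlpha_of_forall_exists_norm_lt fun ε hε => ?_
  have hlarge : ∀ᶠ t : ℝ in atTop,
      0 < t ∧ 2 * (n + 1) * t ^ (-(β / n)) ≤ t ^ (σ * -α) ∧ t ^ (σ * -α) < ε := by
    refine (eventually_gt_atTop 0).and <| (eventually_const_mul_rpow_le_rpow _ hexp).and ?_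
    rw [mul_neg]
    exact (tendsto_rpow_neg_atTop (mul_pos hσ hα)).eventually_lt_const hε
  have hnorm : Tendsto (fun u : Fin n → ℤ => ‖u‖) cofinite atTop := by
    rw [← cocompact_eq_cofinite]
    exact tendsto_norm_cocompact_atTop
  obtain ⟨u, ⟨v, huv⟩, hu, hbound, hlt⟩ :=
    ((frequently_of_mem_LBeta hx).and_eventually (hnorm.eventually hlarge)).exists
  obtain ⟨q, p, hq, hqle, hqp⟩ :=
    exists_simultaneous_approx_of_linear_rpow (v := v) (norm_pos_iff.1 hu) hβ.le (mod_cast huv)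
  rw [Fintype.card_fin] at hqle hqp
  have herr := hqp.trans hbound
  refine ⟨q, p, hq, herr.trans ?_, herr.trans_lt hlt⟩
  rw [Real.rpow_mul hu.le]
  exact Real.rpow_le_rpow_of_nonpos (Nat.cast_pos.2 hq) hqle (neg_nonpos.2 hα.le)

end WellApproximable

/-- Khintchine's transference principle: the set of very well approximable
vectors in `ℝⁿ` defined simultaneously equals the one defined linearly:
`⋃_{α > 1/n} S_α(ℝⁿ) = ⋃_{β > n} L_β(ℝⁿ)`. -/
theorem stmt_16 (n : ℕ) (hn : 0 < n) :
    (⋃ α ∈ Set.Ioi (1 / (n : ℝ)), SAlpha n α) = ⋃ β ∈ Set.Ioi ((n : ℝ)), LBeta n β := by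
  have hn' : (0 : ℝ) < n := Nat.cast_pos.2 hn
  apply subset_antisymm <;> refine Set.iUnion₂_subset fun γ hγ => ?_
  · have hγ' : (n : ℝ) < n * γ + (n - 1) := by
      linarith [(div_lt_iff₀' hn').1 (Set.mem_Ioi.1 hγ)]
    obtain ⟨β, hnβ, hβγ⟩ := exists_between hγ'
    exact (SAlpha_subset_LBeta (hn'.trans hnβ) hβγ).trans
      (Set.subset_biUnion_of_mem (u := fun β => LBeta n β) hnβ)
  · have hγ0 : 0 < γ := hn'.trans hγ
    have hn1 : (1 : ℝ) ≤ n := Nat.one_le_cast.2 hn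
    have hden : 0 < (n - 1) * γ + n :=
      add_pos_of_nonneg_of_pos (mul_nonneg (sub_nonneg.2 hn1) hγ0.le) hn'
    have hγ' : 1 / (n : ℝ) < γ / ((n - 1) * γ + n) := by
      rw [div_lt_div_iff₀ hn' hden]
      linarith [Set.mem_Ioi.1 hγ]
    obtain ⟨α, hnα, hαγ⟩ := exists_between hγ'
    exact (LBeta_subset_SAlpha hn ((one_div_pos.2 hn').trans hnα) hγ0 hαγ).trans
      (Set.subset_biUnion_of_mem (u := fun α => SAlpha n α) hnα)
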